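/- Suppose p₁, p₂, p₃ are integers with 0 < p₁ < p₂ < p₃ and u = (u₁,…,u₇) ∈ N_ν(p). If at least three of the seven coordinates u₁,…,u₇ are zero, then u₁ ≠ 0 and none of the three pairs (u₂,u₃), (u₄,u₅), (u₆,u₇) equals (0,0). -/

import Mathlib

open Quaternion

noncomputable section

/-- The imaginary quaternion unit `i`. -/
def qi : ℍ[ℝ] := ⟨0, 1, 0, 0⟩
/-- The imaginary quaternion unit `j`. -/
def qj : ℍ[ℝ] := ⟨0, 0, 1, 0⟩
/-- The imaginary quaternion unit `k`. -/
def qk : ℍ[ℝ] := ⟨0, 0, 0, 1⟩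

/-- `u ∈ N_ν(p)`: `u` lies on the unit sphere of `ℍ⁷`, the `Sp(1)` moment map vanishes,
and the `U(1)_p` moment map vanishes.  Coordinates are `0`-indexed, so `u 0` is `u₁` and the
quaternionic pairs are `(u 1, u 2), (u 3, u 4), (u 5, u 6)`. -/
def inN (p₁ p₂ p₃ : ℤ) (u : Fin 7 → ℍ[ℝ]) : Prop :=
  (∑ α, ‖u α‖ ^ 2) = 1 ∧
  (∑ α, star (u α) * qi * u α) = 0 ∧
  (∑ α, star (u α) * qj * u α) = 0 ∧
  (∑ α, star (u α) * qk * u α) = 0 ∧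
  (p₁ : ℍ[ℝ]) * (star (u 1) * u 2 - star (u 2) * u 1) +
    (p₂ : ℍ[ℝ]) * (star (u 3) * u 4 - star (u 4) * u 3) +
    (p₃ : ℍ[ℝ]) * (star (u 5) * u 6 - star (u 6) * u 5) = 0

/-- The action of `(λ, z) ∈ Sp(1) × U(1)_p` on `ℍ⁷`: `z` fixes `u 0` and rotates each
quaternionic pair `(u (2α-1), u (2α))` by the phase `z ^ pα`, and then `λ` multiplies every
coordinate on the left. -/
def act (p₁ p₂ p₃ : ℤ) (lam : ℍ[ℝ]) (z : ℂ) (u : Fin 7 → ℍ[ℝ]) : Fin 7 → ℍ[ℝ] :=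
  fun α => lam *
    (![u 0,
       (z ^ p₁).re • u 1 + (z ^ p₁).im • u 2,
       (-(z ^ p₁).im) • u 1 + (z ^ p₁).re • u 2,
       (z ^ p₂).re • u 3 + (z ^ p₂).im • u 4,
       (-(z ^ p₂).im) • u 3 + (z ^ p₂).re • u 4,
       (z ^ p₃).re • u 5 + (z ^ p₃).im • u 6,
       (-(z ^ p₃).im) • u 5 + (z ^ p₃).re • u 6] α)

/-!
The `Sp(1)` moment map equation says that `a ↦ ∑ conj(u_α) a u_α` kills imaginary quaternions, and
this makes the coordinates of `u` a tight frame of `ℍ ≅ ℝ⁴`. A tight frame with at most four nonzero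
vectors is an orthogonal basis of vectors of equal length, so at a vertex each pair contributes to
the `U(1)` moment map either `0` or a vector whose length is proportional to `|p_α|`. Four nonzero
coordinates leave room for at most two nonzero contributions, and these cannot cancel when the
`|p_α|` are nonzero and distinct. Hence every pair has a vanishing coordinate, and the four nonzero
coordinates must be `u₁` and one from each pair.
-/

section TightFrame

variable {ι E : Type*} [Fintype ι] [NormedAddCommGroup E] [InnerProductSpace ℝ E]

/-- The finite family `u` is a tight frame with frame constant `c`, expressed through the Parseval
identity. The constant is not required to be positive, so the zero family is allowed. -/
def IsTightFrame (c : ℝ) (u : ι → E) : Prop :=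
  ∀ x, ∑ α, inner ℝ x (u α) ^ 2 = c * ‖x‖ ^ 2

namespace IsTightFrame

variable {c : ℝ} {u : ι → E} {α β : ι}

theorem norm_sq_le (hu : IsTightFrame c u) (hα : u α ≠ 0) : ‖u α‖ ^ 2 ≤ c := by
  have hpos : 0 < ‖u α‖ ^ 2 := by positivity
  refine le_of_mul_le_mul_right ?_ hpos
  calc ‖u α‖ ^ 2 * ‖u α‖ ^ 2 = inner ℝ (u α) (u α) ^ 2 := by
        rw [real_inner_self_eq_norm_sq, sq (‖u α‖ ^ 2)]
    _ ≤ ∑ β, inner ℝ (u α) (u β) ^ 2 :=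
        Finset.single_le_sum (f := fun β ↦ inner ℝ (u α) (u β) ^ 2)
          (fun _ _ ↦ sq_nonneg _) (Finset.mem_univ α)
    _ = c * ‖u α‖ ^ 2 := hu (u α)

theorem inner_eq_zero_of_norm_sq_eq (hu : IsTightFrame c u) (hα : ‖u α‖ ^ 2 = c) (hαβ : α ≠ β) :
    inner ℝ (u α) (u β) = 0 := by
  have hpair := Finset.add_le_sum (f := fun β ↦ inner ℝ (u α) (u β) ^ 2)
    (fun _ _ ↦ sq_nonneg _) (Finset.mem_univ α) (Finset.mem_univ β) hαβ
  rw [hu (u α), real_inner_self_eq_norm_sq, hα, ← sq, add_le_iff_nonpos_right] at hpair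
  exact (sq_nonpos_iff _).1 hpair

variable [FiniteDimensional ℝ E]

theorem sum_norm_sq (hu : IsTightFrame c u) : ∑ α, ‖u α‖ ^ 2 = Module.finrank ℝ E * c := by
  let b := stdOrthonormalBasis ℝ E
  calc ∑ α, ‖u α‖ ^ 2 = ∑ α, ∑ i, inner ℝ (b i) (u α) ^ 2 := by simp only [b.sum_sq_inner_right]
    _ = ∑ i, ∑ α, inner ℝ (b i) (u α) ^ 2 := Finset.sum_comm
    _ = ∑ _i : Fin (Module.finrank ℝ E), c := by
        simp only [hu (b _), b.norm_eq_one, one_pow, mul_one]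
    _ = Module.finrank ℝ E * c := by rw [Fin.sum_const, nsmul_eq_mul]

open scoped Classical in
theorem sum_support_sub_norm_sq (hu : IsTightFrame c u) :
    ∑ α ∈ (Function.support u).toFinset, (c - ‖u α‖ ^ 2)
      = ((Function.support u).ncard - Module.finrank ℝ E) * c := by
  have hnorm : ∑ α ∈ (Function.support u).toFinset, ‖u α‖ ^ 2 = Module.finrank ℝ E * c := by
    rw [← hu.sum_norm_sq]
    exact Finset.sum_subset (Finset.subset_univ _) (by simp)
  rw [Finset.sum_sub_distrib, hnorm, Finset.sum_const, nsmul_eq_mul, Set.ncard_eq_toFinset_card',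
    sub_mul]

theorem finrank_le_ncard_support (hu : IsTightFrame c u) (hc : 0 < c) :
    Module.finrank ℝ E ≤ (Function.support u).ncard := by
  classical
  have hnonneg : 0 ≤ ((Function.support u).ncard - Module.finrank ℝ E : ℝ) * c := by
    rw [← hu.sum_support_sub_norm_sq]
    exact Finset.sum_nonneg fun β hβ ↦ sub_nonneg.2 (hu.norm_sq_le (Set.mem_toFinset.1 hβ))
  exact_mod_cast sub_nonneg.1 (nonneg_of_mul_nonneg_left hnonneg hc)

theorem norm_sq_eq (hu : IsTightFrame c u)
    (hcard : (Function.support u).ncard ≤ Module.finrank ℝ E) (hα : u α ≠ 0) :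
    ‖u α‖ ^ 2 = c := by
  classical
  have hc : 0 ≤ c := (sq_nonneg _).trans (hu.norm_sq_le hα)
  have hnonneg : ∀ β ∈ (Function.support u).toFinset, 0 ≤ c - ‖u β‖ ^ 2 :=
    fun β hβ ↦ sub_nonneg.2 (hu.norm_sq_le (Set.mem_toFinset.1 hβ))
  have hnonpos : ∑ β ∈ (Function.support u).toFinset, (c - ‖u β‖ ^ 2) ≤ 0 := by
    rw [hu.sum_support_sub_norm_sq]
    exact mul_nonpos_of_nonpos_of_nonneg (sub_nonpos.2 (by exact_mod_cast hcard)) hc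
  have hzero := (Finset.sum_eq_zero_iff_of_nonneg hnonneg).1
    (hnonpos.antisymm (Finset.sum_nonneg hnonneg)) α (Set.mem_toFinset.2 hα)
  exact (sub_eq_zero.1 hzero).symm

theorem inner_eq_zero (hu : IsTightFrame c u)
    (hcard : (Function.support u).ncard ≤ Module.finrank ℝ E) (hαβ : α ≠ β) :
    inner ℝ (u α) (u β) = 0 := by
  by_cases hα : u α = 0
  · rw [hα, inner_zero_left]
  · exact hu.inner_eq_zero_of_norm_sq_eq (hu.norm_sq_eq hcard hα) hαβ

end IsTightFrame

end TightFrame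

section Counting

theorem eq_zero_of_sum_eq_zero_of_ncard_support_le_two {κ E : Type*} [Fintype κ]
    [SeminormedAddCommGroup E] {m : κ → E} (hsum : ∑ i, m i = 0)
    (hcard : (Function.support m).ncard ≤ 2) (hnorm : (Function.support m).InjOn (‖m ·‖)) :
    m = 0 := by
  by_contra! hm
  obtain ⟨i, hi⟩ := Function.ne_iff.1 hm
  obtain ⟨j, hji, hj⟩ : ∃ j, j ≠ i ∧ m j ≠ 0 := by
    by_contra! hzero
    exact hi (by rw [← Fintype.sum_eq_single i hzero, hsum, Pi.zero_apply])
  have hsupp : {i, j} = Function.support m :=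
    Set.eq_of_subset_of_ncard_le (Set.pair_subset hi hj) (by rwa [Set.ncard_pair hji.symm])
  have hcancel : m i + m j = 0 := by
    rw [← hsum, Fintype.sum_eq_add i j hji.symm]
    intro k hk
    by_contra hmk
    rcases hsupp.symm.subset hmk with h | h
    exacts [hk.1 h, hk.2 h]
  have hnorm_eq : ‖m j‖ = ‖m i‖ := by rw [eq_neg_of_add_eq_zero_left hcancel, norm_neg]
  exact hji (hnorm hj hi hnorm_eq)

theorem two_mul_ncard_inter_preimage_le {κ ι : Type*} {a b : κ → ι} {s : Set ι} (hs : s.Finite)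
    (hab : Function.Injective (Sum.elim a b)) :
    2 * (a ⁻¹' s ∩ b ⁻¹' s).ncard ≤ s.ncard := by
  obtain ⟨ha, hb, hne⟩ := Sum.elim_injective.1 hab
  set t := a ⁻¹' s ∩ b ⁻¹' s
  have hdisj : Disjoint (a '' t) (b '' t) := by
    rw [Set.disjoint_left]
    rintro _ ⟨i, -, rfl⟩ ⟨j, -, hij⟩
    exact hne i j hij.symm
  have hsub_a : a '' t ⊆ s := Set.image_subset_iff.2 Set.inter_subset_left
  have hsub_b : b '' t ⊆ s := Set.image_subset_iff.2 Set.inter_subset_right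
  calc 2 * t.ncard = (a '' t ∪ b '' t).ncard := by
        rw [Set.ncard_union_eq hdisj (hs.subset hsub_a) (hs.subset hsub_b),
          Set.ncard_image_of_injective _ ha, Set.ncard_image_of_injective _ hb, two_mul]
    _ ≤ s.ncard := Set.ncard_le_ncard (Set.union_subset hsub_a hsub_b) hs

end Counting

section MomentMaps

theorem inner_eq_re_star_mul (x y : ℍ[ℝ]) : inner ℝ x y = (star x * y).re := by
  simp [Quaternion.inner_def]

/-- The `U(1)` moment map of a single quaternionic pair `(x, y)` of weight one: twice the imaginary
part of `conj(x) y`. -/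
def pairMoment (x y : ℍ[ℝ]) : ℍ[ℝ] :=
  star x * y - star y * x

theorem norm_pairMoment {x y : ℍ[ℝ]} (hxy : inner ℝ x y = 0) :
    ‖pairMoment x y‖ = 2 * (‖x‖ * ‖y‖) := by
  have himag : star (star x * y) = -(star x * y) := by
    rw [Quaternion.star_eq_neg, ← inner_eq_re_star_mul, hxy]
  have hmoment : pairMoment x y = (2 : ℝ) • (star x * y) := by
    rw [star_mul, star_star] at himag
    rw [pairMoment, himag, sub_neg_eq_add, two_smul]
  rw [hmoment, norm_smul, norm_mul, norm_star, Real.norm_ofNat]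

theorem pairMoment_ne_zero_iff {x y : ℍ[ℝ]} (hxy : inner ℝ x y = 0) :
    pairMoment x y ≠ 0 ↔ x ≠ 0 ∧ y ≠ 0 := by
  rw [← norm_ne_zero_iff, norm_pairMoment hxy]
  simp

-- The real part of `w * w`, with the second factor expanded as
-- `w = -(1/2) * (star w + i * star w * i + j * star w * j + k * star w * k)`.
theorem four_mul_re_sq (w : ℍ[ℝ]) :
    4 * w.re ^ 2 = ‖w‖ ^ 2 + inner ℝ (w * qi * star w) qi
      + inner ℝ (w * qj * star w) qj + inner ℝ (w * qk * star w) qk := by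
  rw [← real_inner_self_eq_norm_sq]
  simp only [Quaternion.inner_def, Quaternion.re_mul, Quaternion.imI_mul, Quaternion.imJ_mul,
    Quaternion.imK_mul, Quaternion.re_star, Quaternion.imI_star, Quaternion.imJ_star,
    Quaternion.imK_star]
  simp only [qi, qj, qk]
  ring

theorem four_mul_inner_sq (x y : ℍ[ℝ]) :
    4 * inner ℝ x y ^ 2 = ‖x‖ ^ 2 * ‖y‖ ^ 2
      + inner ℝ (star y * (x * qi * star x) * y) qi
      + inner ℝ (star y * (x * qj * star x) * y) qj
      + inner ℝ (star y * (x * qk * star x) * y) qk := by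
  have h := four_mul_re_sq (star y * x)
  rw [← inner_eq_re_star_mul, real_inner_comm, norm_mul, norm_star, mul_pow,
    mul_comm (‖y‖ ^ 2)] at h
  simpa only [star_mul, star_star, mul_assoc] using h

variable {ι : Type*} [Fintype ι] {u : ι → ℍ[ℝ]}

theorem sum_star_mul_mul_eq_zero_of_re_eq_zero (hi : ∑ α, star (u α) * qi * u α = 0)
    (hj : ∑ α, star (u α) * qj * u α = 0) (hk : ∑ α, star (u α) * qk * u α = 0)
    {q : ℍ[ℝ]} (hq : q.re = 0) : ∑ α, star (u α) * q * u α = 0 := by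
  have hdecomp : q = q.imI • qi + q.imJ • qj + q.imK • qk := by
    ext <;>
      simp only [Quaternion.re_add, Quaternion.imI_add, Quaternion.imJ_add, Quaternion.imK_add,
        Quaternion.re_smul, Quaternion.imI_smul, Quaternion.imJ_smul, Quaternion.imK_smul] <;>
      simp [qi, qj, qk, hq]
  rw [hdecomp]
  simp only [mul_add, add_mul, mul_smul_comm, smul_mul_assoc, Finset.sum_add_distrib,
    ← Finset.smul_sum, hi, hj, hk, smul_zero, add_zero]

theorem isTightFrame_of_forall_sum_star_mul_mul_eq_zero
    (hu : ∀ q : ℍ[ℝ], q.re = 0 → ∑ α, star (u α) * q * u α = 0) :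
    IsTightFrame ((∑ α, ‖u α‖ ^ 2) / 4) u := by
  intro x
  have hrotate : ∀ q : ℍ[ℝ], q.re = 0 →
      ∑ α, inner ℝ (star (u α) * (x * q * star x) * u α) q = 0 := by
    intro q hq
    have hconj : (x * q * star x).re = 0 := by
      simp only [Quaternion.re_mul, Quaternion.imI_mul, Quaternion.imJ_mul, Quaternion.imK_mul,
        Quaternion.re_star, Quaternion.imI_star, Quaternion.imJ_star, Quaternion.imK_star, hq]
      ring
    rw [← sum_inner, hu _ hconj, inner_zero_left]
  have hsum : 4 * ∑ α, inner ℝ x (u α) ^ 2 = ‖x‖ ^ 2 * ∑ α, ‖u α‖ ^ 2 := by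
    simp only [Finset.mul_sum, four_mul_inner_sq, Finset.sum_add_distrib, hrotate qi rfl,
      hrotate qj rfl, hrotate qk rfl, add_zero]
  linarith

theorem IsTightFrame.norm_pairMoment_eq {c : ℝ} {α β : ι} (hu : IsTightFrame c u)
    (hcard : (Function.support u).ncard ≤ Module.finrank ℝ ℍ[ℝ]) (hαβ : α ≠ β)
    (hα : u α ≠ 0) (hβ : u β ≠ 0) : ‖pairMoment (u α) (u β)‖ = 2 * c := by
  have hα_sq := hu.norm_sq_eq hcard hα
  have hnorm : ‖u α‖ = ‖u β‖ := by
    rw [← sq_eq_sq₀ (norm_nonneg _) (norm_nonneg _), hα_sq, hu.norm_sq_eq hcard hβ]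
  rw [norm_pairMoment (hu.inner_eq_zero hcard hαβ), ← hnorm, ← sq, hα_sq]

theorem IsTightFrame.eq_zero_or_eq_zero_of_sum_smul_pairMoment_eq_zero {κ : Type*} [Fintype κ]
    {c : ℝ} (hu : IsTightFrame c u)
    (hcard : (Function.support u).ncard ≤ Module.finrank ℝ ℍ[ℝ]) {a b : κ → ι}
    (hab : Function.Injective (Sum.elim a b)) {p : κ → ℝ} (hp : ∀ i, p i ≠ 0)
    (hp_abs : Function.Injective fun i ↦ |p i|)
    (hsum : ∑ i, p i • pairMoment (u (a i)) (u (b i)) = 0) (i : κ) :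
    u (a i) = 0 ∨ u (b i) = 0 := by
  have hne (i : κ) : a i ≠ b i := (Sum.elim_injective.1 hab).2.2 i i
  set m : κ → ℍ[ℝ] := fun i ↦ p i • pairMoment (u (a i)) (u (b i))
  have hmoment (i : κ) : pairMoment (u (a i)) (u (b i)) ≠ 0 ↔ u (a i) ≠ 0 ∧ u (b i) ≠ 0 :=
    pairMoment_ne_zero_iff (hu.inner_eq_zero hcard (hne i))
  have hsupp : Function.support m = a ⁻¹' Function.support u ∩ b ⁻¹' Function.support u :=
    Set.ext fun i ↦ (smul_ne_zero_iff_right (hp i)).trans (hmoment i)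
  have hfew : (Function.support m).ncard ≤ 2 := by
    have htwice := two_mul_ncard_inter_preimage_le (Set.toFinite (Function.support u)) hab
    rw [Quaternion.finrank_eq_four] at hcard
    rw [hsupp]
    lia
  have hlength {i : κ} (hi : i ∈ Function.support m) :
      ‖pairMoment (u (a i)) (u (b i))‖ = 2 * c :=
    hu.norm_pairMoment_eq hcard (hne i) (hsupp.subset hi).1 (hsupp.subset hi).2
  have hinj : (Function.support m).InjOn (‖m ·‖) := by
    intro i hi j hj hij
    have hc : 2 * c ≠ 0 := hlength hi ▸ norm_ne_zero_iff.2 ((hmoment i).2 (hsupp.subset hi))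
    have hmul : |p i| * (2 * c) = |p j| * (2 * c) := by
      simpa only [m, norm_smul, Real.norm_eq_abs, hlength hi, hlength hj] using hij
    exact hp_abs (mul_right_cancel₀ hc hmul)
  have hm : m = 0 := eq_zero_of_sum_eq_zero_of_ncard_support_le_two hsum hfew hinj
  have hi : i ∉ Function.support m := Function.notMem_support.2 (congrFun hm i)
  rw [hsupp] at hi
  by_contra! h
  exact hi h

end MomentMaps

theorem inN.isTightFrame {p₁ p₂ p₃ : ℤ} {u : Fin 7 → ℍ[ℝ]} (hu : inN p₁ p₂ p₃ u) :
    IsTightFrame (1 / 4) u := by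
  obtain ⟨hsphere, hi, hj, hk, -⟩ := hu
  rw [← hsphere]
  exact isTightFrame_of_forall_sum_star_mul_mul_eq_zero fun _ ↦
    sum_star_mul_mul_eq_zero_of_re_eq_zero hi hj hk

theorem inN.sum_smul_pairMoment_eq_zero {p : Fin 3 → ℤ} {u : Fin 7 → ℍ[ℝ]}
    (hu : inN (p 0) (p 1) (p 2) u) :
    ∑ i, (p i : ℝ) • pairMoment (u (![1, 3, 5] i)) (u (![2, 4, 6] i)) = 0 := by
  obtain ⟨-, -, -, -, hU⟩ := hu
  simpa [Fin.sum_univ_three, pairMoment, Int.cast_smul_eq_zsmul] using hU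

theorem zero_mem_and_mem_or_mem_of_four_le_ncard {s : Set (Fin 7)} (hs : 4 ≤ s.ncard)
    (h₁ : 1 ∉ s ∨ 2 ∉ s) (h₂ : 3 ∉ s ∨ 4 ∉ s) (h₃ : 5 ∉ s ∨ 6 ∉ s) :
    0 ∈ s ∧ (1 ∈ s ∨ 2 ∈ s) ∧ (3 ∈ s ∨ 4 ∈ s) ∧ (5 ∈ s ∨ 6 ∈ s) := by
  classical
  rw [Set.ncard_eq_toFinset_card', ← Set.filter_mem_univ_eq_toFinset, Finset.card_filter,
    Fin.sum_univ_seven] at hs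
  grind

theorem vertex_lemma_general (p : Fin 3 → ℤ) (hp : ∀ i, p i ≠ 0)
    (hp_abs : Function.Injective fun i ↦ |p i|) (u : Fin 7 → ℍ[ℝ])
    (hu : inN (p 0) (p 1) (p 2) u) (hvanish : 3 ≤ {α : Fin 7 | u α = 0}.ncard) :
    u 0 ≠ 0 ∧ ¬(u 1 = 0 ∧ u 2 = 0) ∧ ¬(u 3 = 0 ∧ u 4 = 0) ∧ ¬(u 5 = 0 ∧ u 6 = 0) := by
  have hframe := hu.isTightFrame
  have hge : Module.finrank ℝ ℍ[ℝ] ≤ (Function.support u).ncard :=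
    hframe.finrank_le_ncard_support (by norm_num)
  have hle : (Function.support u).ncard ≤ Module.finrank ℝ ℍ[ℝ] := by
    have hcompl : {α | u α = 0}.ncard + (Function.support u).ncard = Nat.card (Fin 7) :=
      Set.ncard_add_ncard_compl {α | u α = 0}
    rw [Nat.card_fin] at hcompl
    rw [Quaternion.finrank_eq_four]
    lia
  have hreal_abs : Function.Injective fun i ↦ |(p i : ℝ)| := by
    simpa only [← Int.cast_abs, Function.comp_def] using Int.cast_injective.comp hp_abs
  have hpair := hframe.eq_zero_or_eq_zero_of_sum_smul_pairMoment_eq_zero hle (by decide)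
    (fun i ↦ Int.cast_ne_zero.2 (hp i)) hreal_abs hu.sum_smul_pairMoment_eq_zero
  rw [Quaternion.finrank_eq_four] at hge
  simpa only [Function.mem_support, ← not_and_or] using
    zero_mem_and_mem_or_mem_of_four_le_ncard hge (by simpa using hpair 0)
      (by simpa using hpair 1) (by simpa using hpair 2)

/-- Lemma 2.7 of the paper: if `0 < p₁ < p₂ < p₃` and at least three quaternionic coordinates
of `u ∈ N_ν(p)` vanish, then `u₁ ≠ 0` and no quaternionic pair `(u_{2α}, u_{2α+1})` vanishes. -/
theorem vertex_lemma (p₁ p₂ p₃ : ℤ) (hp₁ : 0 < p₁) (hp₁₂ : p₁ < p₂) (hp₂₃ : p₂ < p₃)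
    (u : Fin 7 → ℍ[ℝ]) (hu : inN p₁ p₂ p₃ u)
    (hvanish : 3 ≤ {α : Fin 7 | u α = 0}.ncard) :
    u 0 ≠ 0 ∧ ¬(u 1 = 0 ∧ u 2 = 0) ∧ ¬(u 3 = 0 ∧ u 4 = 0) ∧ ¬(u 5 = 0 ∧ u 6 = 0) := by
  have hmono : StrictMono ![p₁, p₂, p₃] := by simp [hp₁₂, hp₂₃]
  have hpos (i : Fin 3) : 0 < ![p₁, p₂, p₃] i := hp₁.trans_le (hmono.monotone (Fin.zero_le i))
  exact vertex_lemma_general ![p₁, p₂, p₃] (fun i ↦ (hpos i).ne')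
    (by simpa only [abs_of_pos (hpos _)] using hmono.injective) u hu hvanish
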